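/- Let z > 0, w > 0, y > 0, and v ∈ (0,1) with z·e^{zv} < e^z − 1. Set r̂ := z/(z+w) and define h_2(r) := 1 + (e^{z/r} − 1)/(((1−r)/r)·e^{(y+z)/r}·e^{−zv/r} + 1) for r ∈ (0,1). Then h_2 single-crosses the constant e^z from above to below as r increases on [r̂, 1): for all r̂ ≤ r' < r'' < 1, if e^z ≥ h_2(r') then e^z > h_2(r''). -/

import Mathlib

/-!
Substitute `s = 1/r - 1 > 0` and put `c = y + z - z v`, `K = (e^z - 1) e^{c - z}`. Clearing
denominators, `h₂ r ≤ e^z` becomes `G s ≤ K`, where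
`G s = (e^{zs} - 1) e^{-cs} / s = ∫ x in 0..z, e^{(x - c) s}`, and likewise for `<`.
As an integral of exponentials, `G` is convex on `s ≥ 0`, with `G 0 = z`, and the hypothesis
`z e^{zv} < e^z - 1` together with `y > 0` gives `z < K`. Hence `G s' ≤ K` forces `G s < K` for
`0 < s < s'`, that is, for larger `r`.
-/

lemma integral_exp_sub_mul (z c s : ℝ) (hs : 0 < s) :
    ∫ x in (0 : ℝ)..z, Real.exp ((x - c) * s) =
      (Real.exp (z * s) - 1) * Real.exp (-(c * s)) / s := by
  have hd : ∀ x ∈ Set.uIcc 0 z,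
      HasDerivAt (fun x => Real.exp ((x - c) * s) / s) (Real.exp ((x - c) * s)) x := by
    intro x _
    have h : HasDerivAt (fun x => Real.exp ((x - c) * s) / s)
        (Real.exp ((x - c) * s) * (1 * s) / s) x :=
      ((((hasDerivAt_id x).sub_const c).mul_const s).exp).div_const s
    rwa [one_mul, mul_div_cancel_right₀ _ hs.ne'] at h
  rw [intervalIntegral.integral_eq_sub_of_hasDerivAt hd
    (Continuous.intervalIntegrable (by fun_prop) _ _)]
  rw [show (z - c) * s = z * s + -(c * s) by ring, show (0 - c) * s = -(c * s) by ring,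
    Real.exp_add]
  ring

/-- The convexity step `G s ≤ (1 - s/s') G 0 + (s/s') G s' < K`, with denominators cleared. -/
lemma exp_crossing (z c K s s' : ℝ) (hz : 0 < z) (hK : z < K) (hs : 0 < s) (hss : s < s')
    (h : Real.exp (z * s') - 1 ≤ K * (s' * Real.exp (c * s'))) :
    Real.exp (z * s) - 1 < K * (s * Real.exp (c * s)) := by
  have hs' : 0 < s' := hs.trans hss
  obtain ⟨θ, hθ⟩ : ∃ θ, θ = s / s' := ⟨_, rfl⟩
  have hθ0 : 0 < θ := hθ ▸ div_pos hs hs'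
  have hθ1 : θ < 1 := hθ ▸ (div_lt_one hs').2 hss
  have hsθ : s = θ * s' := by rw [hθ]; field_simp
  have hconv : ∫ x in (0 : ℝ)..z, Real.exp ((x - c) * s) ≤
      ∫ x in (0 : ℝ)..z, (θ * Real.exp ((x - c) * s') + (1 - θ)) := by
    apply intervalIntegral.integral_mono_on hz.le
    · exact Continuous.intervalIntegrable (by fun_prop) _ _
    · exact Continuous.intervalIntegrable (by fun_prop) _ _
    · intro x _
      have := convexOn_exp.2 (Set.mem_univ ((x - c) * s')) (Set.mem_univ 0) hθ0.le
        (sub_nonneg.2 hθ1.le) (by ring)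
      simp only [smul_eq_mul, mul_zero, add_zero, Real.exp_zero, mul_one] at this
      rwa [hsθ, show (x - c) * (θ * s') = θ * ((x - c) * s') by ring]
  rw [intervalIntegral.integral_add (Continuous.intervalIntegrable (by fun_prop) _ _)
    (Continuous.intervalIntegrable (by fun_prop) _ _), intervalIntegral.integral_const_mul,
    integral_exp_sub_mul z c s hs, integral_exp_sub_mul z c s' hs',
    intervalIntegral.integral_const, smul_eq_mul, sub_zero] at hconv
  have h1 : (Real.exp (z * s') - 1) * Real.exp (-(c * s')) / s' ≤ K := by
    rw [Real.exp_neg, ← div_eq_mul_inv, div_div, div_le_iff₀ (by positivity)]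
    linarith [mul_comm s' (Real.exp (c * s'))]
  have h2 : (Real.exp (z * s) - 1) * Real.exp (-(c * s)) / s < K := by
    nlinarith [mul_le_mul_of_nonneg_left h1 hθ0.le, mul_lt_mul_of_pos_right hK (sub_pos.2 hθ1)]
  rw [Real.exp_neg, ← div_eq_mul_inv, div_div, div_lt_iff₀ (by positivity)] at h2
  linarith [mul_comm s (Real.exp (c * s))]

/-- The difference `e^z - h₂ r` has the sign of `K s e^{cs} - (e^{zs} - 1)`, where
`s = 1/r - 1`. -/
lemma exp_sub_branch_eq (z y v r : ℝ) (hr : 0 < r) (hr1 : r < 1) :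
    ∃ q > 0, Real.exp z - (1 + (Real.exp (z / r) - 1) /
      (((1 - r) / r) * Real.exp ((y + z) / r) * Real.exp (-(z * v) / r) + 1)) =
      q * ((Real.exp z - 1) * Real.exp (y - z * v) *
        ((1 / r - 1) * Real.exp ((y + z - z * v) * (1 / r - 1))) -
          (Real.exp (z * (1 / r - 1)) - 1)) := by
  have hs : 0 < 1 / r - 1 := sub_pos.2 ((one_lt_div hr).2 hr1)
  have e1 : (1 - r) / r = 1 / r - 1 := by field_simp
  have e2 : z / r = z + z * (1 / r - 1) := by ring
  -- `e^{(y+z)/r} e^{-zv/r} = e^{c(1+s)}`, split so that the factor `e^z` is explicit.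
  have e3 : Real.exp ((y + z) / r) * Real.exp (-(z * v) / r) =
      Real.exp z * (Real.exp (y - z * v) * Real.exp ((y + z - z * v) * (1 / r - 1))) := by
    rw [← Real.exp_add, ← Real.exp_add, ← Real.exp_add]
    congr 1
    ring
  rw [mul_assoc, e3, e1, e2, Real.exp_add]
  generalize 1 / r - 1 = s at *
  have hD : 0 < s * (Real.exp z * (Real.exp (y - z * v) * Real.exp ((y + z - z * v) * s))) + 1 := by
    positivity
  refine ⟨Real.exp z / _, div_pos (Real.exp_pos z) hD, ?_⟩
  field_simp
  ring

/-- Under z·e^{zv} < e^z − 1, the branch h₂ of the Boston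
equilibrium condition single-crosses the constant e^z from above to below
on [r̂, 1). -/
theorem boston_branch_two_single_crossing
    (z w y v : ℝ) (hz : 0 < z) (hw : 0 < w) (hy : 0 < y)
    (hv : v ∈ Set.Ioo (0 : ℝ) 1)
    (hvbar : z * Real.exp (z * v) < Real.exp z - 1)
    (rhat : ℝ) (hrhat : rhat = z / (z + w))
    (h₂ : ℝ → ℝ)
    (hh₂ : ∀ r, h₂ r = 1 + (Real.exp (z / r) - 1) /
      (((1 - r) / r) * Real.exp ((y + z) / r) * Real.exp (-(z * v) / r) + 1)) :
    ∀ r' r'', rhat ≤ r' → r' < r'' → r'' < 1 →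
      Real.exp z ≥ h₂ r' → Real.exp z > h₂ r'' := by
  intro r' r'' h1 h2 h3 h4
  have hr' : 0 < r' := lt_of_lt_of_le (hrhat ▸ div_pos hz (add_pos hz hw)) h1
  have hr'' : 0 < r'' := hr'.trans h2
  obtain ⟨q', hq', e'⟩ := exp_sub_branch_eq z y v r' hr' (h2.trans h3)
  obtain ⟨q'', hq'', e''⟩ := exp_sub_branch_eq z y v r'' hr'' h3
  rw [← hh₂] at e' e''
  have hK : z < (Real.exp z - 1) * Real.exp (y - z * v) := by
    have ha : z < (Real.exp z - 1) * Real.exp (-(z * v)) := by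
      rw [Real.exp_neg, ← div_eq_mul_inv, lt_div_iff₀ (Real.exp_pos _)]
      exact hvbar
    refine ha.trans_le (mul_le_mul_of_nonneg_left (Real.exp_le_exp.2 (by linarith)) ?_)
    exact (lt_trans (by positivity) hvbar).le
  have hcross := exp_crossing z (y + z - z * v) _ (1 / r'' - 1) (1 / r' - 1) hz hK
    (sub_pos.2 ((one_lt_div hr'').2 h3))
    (sub_lt_sub_right (one_div_lt_one_div_of_lt hr' h2) 1)
    (sub_nonneg.1 (nonneg_of_mul_nonneg_right (e' ▸ sub_nonneg.2 h4) hq'))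
  exact sub_pos.1 (e'' ▸ mul_pos hq'' (sub_pos.2 hcross))
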